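/- arXiv:1306.0173 — 8 statements merged into one kernel-verified Lean document; each statement's English description precedes it below -/
import Mathlib

section
/- Let μ ∈ ℝ, σ > 0, and let X be a real random variable with law gaussianReal μ σ². Let f : ℝ → ℝ be convex on [0, ∞) and strictly monotone increasing on [0, ∞), with f(|X − μ|) integrable. Then E[f(|X − μ|)] ≥ f(σ·√(2/π)) > f(0). -/
open MeasureTheory ProbabilityTheory
open scoped NNReal ENNReal

theorem aux_abs_moment (μ : ℝ) (σ : ℝ≥0) (hσ : 0 < σ) :
    ∫ x, |x - μ| ∂(gaussianReal μ (σ ^ 2)) = (σ : ℝ) * Real.sqrt (2 / Real.pi) := by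
  have hs : (0 : ℝ) < σ := by exact_mod_cast hσ
  have hb : (0 : ℝ) < 1 / (2 * (σ : ℝ) ^ 2) := by positivity
  rw [integral_gaussianReal_eq_integral_smul (by positivity)]
  have h1 : ∀ x : ℝ, gaussianPDFReal μ (σ ^ 2) x • |x - μ| =
      (fun y : ℝ => (Real.sqrt (2 * Real.pi * (σ : ℝ) ^ 2))⁻¹ *
        (|y| * Real.exp (-(1 / (2 * (σ : ℝ) ^ 2)) * |y| ^ 2))) (x - μ) := by
    intro x
    simp only [gaussianPDFReal, NNReal.coe_pow, smul_eq_mul, sq_abs]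
    rw [show -(1 / (2 * (σ : ℝ) ^ 2)) * (x - μ) ^ 2 = -(x - μ) ^ 2 / (2 * (σ : ℝ) ^ 2) by ring]
    ring
  simp_rw [h1]
  rw [integral_sub_right_eq_self (fun y : ℝ => (Real.sqrt (2 * Real.pi * (σ : ℝ) ^ 2))⁻¹ *
        (|y| * Real.exp (-(1 / (2 * (σ : ℝ) ^ 2)) * |y| ^ 2))) μ, integral_const_mul,
    integral_comp_abs (f := fun y : ℝ => y * Real.exp (-(1 / (2 * (σ : ℝ) ^ 2)) * y ^ 2))]
  have h2 := integral_rpow_mul_exp_neg_mul_rpow (p := 2) (q := 1) two_pos (by norm_num) hb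
  norm_num at h2
  have h3 : ∫ y in Set.Ioi (0 : ℝ), y * Real.exp (-(1 / (2 * (σ : ℝ) ^ 2)) * y ^ 2)
      = (σ : ℝ) ^ 2 := by
    have h4 : ((σ : ℝ) ^ 2)⁻¹ * 2⁻¹ = (2 * (σ : ℝ) ^ 2)⁻¹ := by ring
    norm_num
    rw [h2]
    rw [Real.rpow_neg_one]
    field_simp
  rw [h3, Real.sqrt_mul (by positivity), Real.sqrt_sq hs.le, Real.sqrt_mul (by norm_num),
    Real.sqrt_div (by norm_num)]
  have h5 : Real.sqrt 2 ^ 2 = 2 := Real.sq_sqrt (by norm_num)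
  have h6 : 0 < Real.sqrt Real.pi := Real.sqrt_pos.2 Real.pi_pos
  field_simp
  rw [h5]

theorem aux_cont (f : ℝ → ℝ) (hconv : ConvexOn ℝ (Set.Ici 0) f)
    (hmono : StrictMonoOn f (Set.Ici 0)) : ContinuousOn f (Set.Ici 0) := by
  intro x hx
  rcases eq_or_lt_of_le (Set.mem_Ici.1 hx) with h | h
  · subst h
    have hlim : Filter.Tendsto (fun x : ℝ => (1 - x) * f 0 + x * f 1)
        (nhdsWithin 0 (Set.Ici 0)) (nhds (f 0)) := by
      have : Continuous (fun x : ℝ => (1 - x) * f 0 + x * f 1) := by fun_prop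
      have h := this.continuousWithinAt (s := Set.Ici 0) (x := 0)
      simpa [ContinuousWithinAt] using h
    refine tendsto_of_tendsto_of_tendsto_of_le_of_le' tendsto_const_nhds hlim ?_ ?_
    · filter_upwards [self_mem_nhdsWithin] with y hy
      exact hmono.monotoneOn (Set.mem_Ici.2 le_rfl) hy hy
    · filter_upwards [self_mem_nhdsWithin, mem_nhdsWithin_of_mem_nhds (Iio_mem_nhds one_pos)]
        with y hy hy1
      have := hconv.2 (Set.mem_Ici.2 le_rfl) (Set.mem_Ici.2 (zero_le_one' ℝ))
        (sub_nonneg.2 (le_of_lt hy1)) hy (by ring)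
      simpa using this
  · have hc : ContinuousOn f (interior (Set.Ici 0)) := hconv.continuousOn_interior
    rw [interior_Ici] at hc
    exact (hc.continuousAt (Ioi_mem_nhds h)).continuousWithinAt

/-- If `X` has law `gaussianReal μ σ²` with `σ > 0` and `f` is convex and strictly
increasing on `[0, ∞)` with `f(|X − μ|)` integrable, then
`E[f(|X − μ|)] ≥ f(σ·√(2/π)) > f(0)`. -/
theorem stmt3 {Ω : Type*} [MeasurableSpace Ω] (P : Measure Ω) [IsProbabilityMeasure P]
    (μ : ℝ) (σ : ℝ≥0) (hσ : 0 < σ) (X : Ω → ℝ) (hXm : Measurable X)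
    (hX : P.map X = gaussianReal μ (σ ^ 2))
    (f : ℝ → ℝ) (hconv : ConvexOn ℝ (Set.Ici 0) f) (hmono : StrictMonoOn f (Set.Ici 0))
    (hint : Integrable (fun ω => f |X ω - μ|) P) :
    (∫ ω, f |X ω - μ| ∂P) ≥ f ((σ : ℝ) * Real.sqrt (2 / Real.pi)) ∧
      f ((σ : ℝ) * Real.sqrt (2 / Real.pi)) > f 0 := by
  have hs : (0 : ℝ) < σ := by exact_mod_cast hσ
  have hpos : 0 < (σ : ℝ) * Real.sqrt (2 / Real.pi) := by positivity
  refine ⟨?_, hmono (Set.mem_Ici.2 le_rfl) hpos.le hpos⟩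
  have hm : ∫ ω, |X ω - μ| ∂P = (σ : ℝ) * Real.sqrt (2 / Real.pi) := by
    rw [← aux_abs_moment μ σ hσ, ← hX, integral_map hXm.aemeasurable
      (by fun_prop)]
  have hi : Integrable X P := by
    have h : Integrable id (P.map X) := by
      rw [hX]
      exact memLp_one_iff_integrable.1 (memLp_id_gaussianReal' 1 (by simp))
    exact h.comp_measurable hXm
  rw [← hm]
  exact hconv.map_integral_le (aux_cont f hconv hmono) isClosed_Ici
    (Filter.Eventually.of_forall fun ω => Set.mem_Ici.2 (abs_nonneg (X ω - μ))) (hi.sub (integrable_const μ)).abs hint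
end

section
/- Fix K ≥ 2 and a user index i. For each j ≠ i let r_j ∈ ℝ, σ_j > 0, and let R_j be a real random variable with law gaussianReal r_j σ_j² (the user's unbiased observation of user j), with f(|R_j − r_j|) integrable, where f : ℝ → ℝ is convex on [0, ∞) and strictly monotone increasing on [0, ∞). Then −Σ_{j≠i} f(0) > −Σ_{j≠i} E[f(|R_j − r_j|)]; that is, the user's expected utility at the truthful equilibrium of the Absolute Scoring mechanism (where every reputation index equals the corresponding true quality, so each accuracy-loss term equals f(0), and the expected tax is zero) strictly exceeds its reserved utility from staying out and relying on its own observations. Hence the Absolute Scoring mechanism is individually rational. -/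
open MeasureTheory ProbabilityTheory
open scoped NNReal ENNReal

/-- Individual rationality of the Absolute Scoring mechanism for a truth-type user `i`:
its expected utility at the truthful equilibrium, `−Σ_{j≠i} f(0)`, strictly exceeds the
reserved utility `−Σ_{j≠i} E[f(|R_j − r_j|)]` of staying out and relying on its own
unbiased Gaussian observations `R_j ~ gaussianReal r_j σ_j²`. -/
theorem stmt4 {Ω : Type*} [MeasurableSpace Ω] (P : Measure Ω) [IsProbabilityMeasure P]
    (K : ℕ) (hK : 2 ≤ K) (i : Fin K) (r : Fin K → ℝ) (σ : Fin K → ℝ≥0)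
    (R : Fin K → Ω → ℝ) (f : ℝ → ℝ)
    (hconv : ConvexOn ℝ (Set.Ici 0) f) (hmono : StrictMonoOn f (Set.Ici 0))
    (hσ : ∀ j, j ≠ i → 0 < σ j)
    (hRm : ∀ j, j ≠ i → Measurable (R j))
    (hR : ∀ j, j ≠ i → P.map (R j) = gaussianReal (r j) (σ j ^ 2))
    (hint : ∀ j, j ≠ i → Integrable (fun ω => f |R j ω - r j|) P) :
    -∑ j ∈ Finset.univ.erase i, f 0 >
      -∑ j ∈ Finset.univ.erase i, ∫ ω, f |R j ω - r j| ∂P := by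
  have key : ∀ j, j ≠ i → f 0 < ∫ ω, f |R j ω - r j| ∂P := by
    intro j hj
    have hv : σ j ^ 2 ≠ 0 := pow_ne_zero 2 (hσ j hj).ne'
    have hnull : P {ω | R j ω = r j} = 0 := by
      have h1 : P.map (R j) {r j} = 0 := by
        rw [hR j hj]
        have := noAtoms_gaussianReal (μ := r j) hv
        exact measure_singleton _
      rw [Measure.map_apply (hRm j hj) (measurableSet_singleton _)] at h1
      exact h1
    have hi : Integrable (fun ω => f |R j ω - r j| - f 0) P :=
      (hint j hj).sub (integrable_const _)
    have hnn : ∀ ω, 0 ≤ f |R j ω - r j| - f 0 := fun ω =>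
      sub_nonneg.2 (hmono.monotoneOn (Set.mem_Ici.2 le_rfl) (Set.mem_Ici.2 (abs_nonneg _))
        (abs_nonneg _))
    have hpos : 0 < ∫ ω, (f |R j ω - r j| - f 0) ∂P := by
      refine lt_of_le_of_ne (integral_nonneg hnn) fun h0 => ?_
      have hae := (integral_eq_zero_iff_of_nonneg hnn hi).1 h0.symm
      have hne : ∀ᵐ ω ∂P, R j ω ≠ r j := by
        rw [ae_iff]
        simpa using hnull
      have hF : ∀ᵐ _ω ∂P, False := by
        filter_upwards [hae, hne] with ω h1 h2
        have h3 : f 0 < f |R j ω - r j| :=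
          hmono (Set.mem_Ici.2 le_rfl) (Set.mem_Ici.2 (abs_nonneg _))
            (abs_pos.2 (sub_ne_zero.2 h2))
        have h4 : f |R j ω - r j| - f 0 = 0 := h1
        linarith
      obtain ⟨_, h⟩ := hF.exists
      exact h
    rw [integral_sub (hint j hj) (integrable_const _)] at hpos
    simp at hpos
    exact hpos
  apply neg_lt_neg
  apply Finset.sum_lt_sum_of_nonempty
  · rw [← Finset.card_pos, Finset.card_erase_of_mem (Finset.mem_univ i), Finset.card_univ,
      Fintype.card_fin]
    omega
  · intro j hj
    exact key j (Finset.ne_of_mem_erase hj)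
end

section
/- Let K ≥ 2 and r : Fin K → ℝ with 0 < r_k ≤ 1 for all k. Fix an index i, and let S = Σ_{k ≠ i} r_k (so S > 0). Let f : ℝ → ℝ be monotone nondecreasing on [0, ∞). Then for every x ∈ [0, 1], Σ_{j ≠ i} f( r_j·|x − r_i| / ((x + S)·(r_i + S)) ) ≥ Σ_{j ≠ i} f(0); equivalently, the utility u(x) = −Σ_{j ≠ i} f( r_j·|x − r_i| / ((x + S)·(r_i + S)) ) is maximized at the truthful report x = r_i. Moreover, if f is strictly increasing on [0, ∞), then x = r_i is the unique maximizer over [0,1]. Hence truthful revelation is a Bayesian Nash equilibrium of the Fair Ranking mechanism. -/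
open MeasureTheory ProbabilityTheory
open scoped NNReal ENNReal

/-- Truthful revelation is a Bayesian Nash equilibrium of the Fair Ranking mechanism:
when all users `k ≠ i` report truthfully, user `i`'s accuracy loss
`Σ_{j≠i} f(r_j·|x − r_i| / ((x + S)(r_i + S)))`, with `S = Σ_{k≠i} r_k`, is minimized
over `x ∈ [0,1]` at the truthful report `x = r_i`; if `f` is strictly increasing on
`[0,∞)`, the truthful report is the unique minimizer. -/
theorem stmt6 (K : ℕ) (hK : 2 ≤ K) (r : Fin K → ℝ) (hr : ∀ k, 0 < r k ∧ r k ≤ 1)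
    (i : Fin K) (f : ℝ → ℝ) (hf : MonotoneOn f (Set.Ici 0)) :
    (∀ x ∈ Set.Icc (0 : ℝ) 1,
        ∑ j ∈ Finset.univ.erase i, f 0 ≤
          ∑ j ∈ Finset.univ.erase i,
            f (r j * |x - r i| /
              ((x + ∑ k ∈ Finset.univ.erase i, r k) *
                (r i + ∑ k ∈ Finset.univ.erase i, r k)))) ∧
    (StrictMonoOn f (Set.Ici 0) →
      ∀ x ∈ Set.Icc (0 : ℝ) 1, x ≠ r i →
        ∑ j ∈ Finset.univ.erase i, f 0 <
          ∑ j ∈ Finset.univ.erase i,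
            f (r j * |x - r i| /
              ((x + ∑ k ∈ Finset.univ.erase i, r k) *
                (r i + ∑ k ∈ Finset.univ.erase i, r k)))) := by
  have hne : (Finset.univ.erase i).Nonempty := by
    rw [← Finset.card_pos, Finset.card_erase_of_mem (Finset.mem_univ i), Finset.card_univ,
      Fintype.card_fin]
    omega
  have hS : 0 < ∑ k ∈ Finset.univ.erase i, r k :=
    Finset.sum_pos (fun k _ => (hr k).1) hne
  have hi := (hr i).1
  constructor
  · intro x hx
    have hx0 : 0 ≤ x := hx.1
    refine Finset.sum_le_sum fun j _ => ?_
    have hj := (hr j).1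
    have h : 0 ≤ r j * |x - r i| / ((x + ∑ k ∈ Finset.univ.erase i, r k) *
        (r i + ∑ k ∈ Finset.univ.erase i, r k)) := by positivity
    exact hf (Set.mem_Ici.2 le_rfl) (Set.mem_Ici.2 h) h
  · intro hs x hx hxr
    have hx0 : 0 ≤ x := hx.1
    refine Finset.sum_lt_sum_of_nonempty hne fun j _ => ?_
    have hj := (hr j).1
    have ha : 0 < |x - r i| := abs_pos.2 (sub_ne_zero.2 hxr)
    have h : 0 < r j * |x - r i| / ((x + ∑ k ∈ Finset.univ.erase i, r k) *
        (r i + ∑ k ∈ Finset.univ.erase i, r k)) :=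
      div_pos (mul_pos hj ha) (mul_pos (by linarith) (by linarith))
    exact hs (Set.mem_Ici.2 le_rfl) (Set.mem_Ici.2 h.le) h
end

section
/- Let σ > 0 and let X be a real random variable with law gaussianReal 0 σ². Then for every c ∈ ℝ and every t ≥ 0, P(|X + c| ≤ t) ≤ P(|X| ≤ t); moreover the inequality is strict whenever c ≠ 0 and t > 0. Equivalently, with Φ the cumulative distribution function of the standard Gaussian, Φ((t − c)/σ) − Φ((−t − c)/σ) ≤ Φ(t/σ) − Φ(−t/σ). -/
open MeasureTheory ProbabilityTheory
open scoped NNReal ENNReal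

lemma aux_cont_s7 (v : ℝ≥0) : Continuous (gaussianPDFReal 0 v) := by
  unfold gaussianPDFReal; fun_prop

lemma aux_Ioc (v : ℝ≥0) (hv : v ≠ 0) (a b : ℝ) (hab : a ≤ b) :
    (gaussianReal 0 v).real (Set.Ioc a b) = ∫ x in a..b, gaussianPDFReal 0 v x := by
  rw [measureReal_def, gaussianReal_apply_eq_integral 0 hv, intervalIntegral.integral_of_le hab,
    ENNReal.toReal_ofReal]
  exact integral_nonneg (fun x => gaussianPDFReal_nonneg _ _ _)

lemma aux_Icc (v : ℝ≥0) (hv : v ≠ 0) (a b : ℝ) (hab : a ≤ b) :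
    (gaussianReal 0 v).real (Set.Icc a b) = ∫ x in a..b, gaussianPDFReal 0 v x := by
  rw [← aux_Ioc v hv a b hab, measureReal_def, measureReal_def]
  have := nullSingletonClass_gaussianReal (μ := 0) hv
  rw [measure_congr Ioc_ae_eq_Icc]

lemma aux_pdf_lt (v : ℝ≥0) (hv : v ≠ 0) (x y : ℝ) (h : x ^ 2 < y ^ 2) :
    gaussianPDFReal 0 v y < gaussianPDFReal 0 v x := by
  have hv' : (0 : ℝ) < v := by positivity
  unfold gaussianPDFReal
  apply mul_lt_mul_of_pos_left _ (by positivity)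
  apply Real.exp_lt_exp.2
  apply div_lt_div_of_pos_right _ (by positivity)
  simpa using h

lemma aux_pos (v : ℝ≥0) (hv : v ≠ 0) (c t : ℝ) (hc : 0 < c) (ht : 0 < t) :
    ∫ x in (-t - c)..(t - c), gaussianPDFReal 0 v x < ∫ x in (-t)..t, gaussianPDFReal 0 v x := by
  have hi : ∀ a b, IntervalIntegrable (gaussianPDFReal 0 v) volume a b :=
    fun a b => (aux_cont_s7 v).intervalIntegrable a b
  have h1 := intervalIntegral.integral_add_adjacent_intervals (hi (-t-c) (-t)) (hi (-t) (t-c))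
  have h2 := intervalIntegral.integral_add_adjacent_intervals (hi (-t) (t-c)) (hi (t-c) t)
  have h3 : ∫ x in (t-c)..t, gaussianPDFReal 0 v (x - 2 * t)
      = ∫ x in (-t-c)..(-t), gaussianPDFReal 0 v x := by
    rw [intervalIntegral.integral_comp_sub_right (fun x => gaussianPDFReal 0 v x)]
    congr 1 <;> ring
  have hlt : ∀ x < t, gaussianPDFReal 0 v (x - 2 * t) < gaussianPDFReal 0 v x :=
    fun x hx => aux_pdf_lt v hv _ _ (by nlinarith)
  have h4 : ∫ x in (t-c)..t, gaussianPDFReal 0 v (x - 2 * t)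
      < ∫ x in (t-c)..t, gaussianPDFReal 0 v x := by
    apply intervalIntegral.integral_lt_integral_of_continuousOn_of_le_of_exists_lt (by linarith)
    · exact ((aux_cont_s7 v).comp (by fun_prop)).continuousOn
    · exact (aux_cont_s7 v).continuousOn
    · intro x hx
      rcases hx.2.lt_or_eq with h | h
      · exact (hlt x h).le
      · subst h
        have : x - 2 * x = -x := by ring
        rw [this]
        simp [gaussianPDFReal]
    · exact ⟨t - c, ⟨le_rfl, by linarith⟩, hlt _ (by linarith)⟩
  linarith

lemma aux_main (v : ℝ≥0) (hv : v ≠ 0) (c t : ℝ) (hc : c ≠ 0) (ht : 0 < t) :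
    ∫ x in (-t - c)..(t - c), gaussianPDFReal 0 v x < ∫ x in (-t)..t, gaussianPDFReal 0 v x := by
  rcases hc.lt_or_gt with h | h
  · have h1 := aux_pos v hv (-c) t (by linarith) ht
    have h2 := intervalIntegral.integral_comp_neg (a := -t - c) (b := t - c) (gaussianPDFReal 0 v)
    have h3 : ∀ x, gaussianPDFReal 0 v (-x) = gaussianPDFReal 0 v x := by
      intro x; simp [gaussianPDFReal]
    simp only [h3] at h2
    rw [h2]
    convert h1 using 2 <;> ring
  · exact aux_pos v hv c t h ht

lemma aux_le (v : ℝ≥0) (hv : v ≠ 0) (c t : ℝ) (ht : 0 ≤ t) :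
    ∫ x in (-t - c)..(t - c), gaussianPDFReal 0 v x ≤ ∫ x in (-t)..t, gaussianPDFReal 0 v x := by
  rcases eq_or_ne c 0 with rfl | hc
  · simp
  rcases ht.eq_or_lt with rfl | ht
  · simp
  · exact (aux_main v hv c t hc ht).le

lemma aux_cdf (a b : ℝ) (hab : a ≤ b) :
    cdf (gaussianReal 0 1) b - cdf (gaussianReal 0 1) a = ∫ x in a..b, gaussianPDFReal 0 1 x := by
  have h : Set.Ioc a b = Set.Iic b \ Set.Iic a := by
    ext x
    simp [and_comm]
  rw [← aux_Ioc 1 one_ne_zero a b hab, cdf_eq_real, cdf_eq_real, h,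
    measureReal_diff (Set.Iic_subset_Iic.2 hab) measurableSet_Iic]

/-- If `X` has law `gaussianReal 0 σ²` with `σ > 0`, then for every `c` and every
`t ≥ 0`, `P(|X + c| ≤ t) ≤ P(|X| ≤ t)`, strictly whenever `c ≠ 0` and `t > 0`;
equivalently, with `Φ` the standard Gaussian cdf,
`Φ((t − c)/σ) − Φ((−t − c)/σ) ≤ Φ(t/σ) − Φ(−t/σ)`. -/
theorem stmt7 {Ω : Type*} [MeasurableSpace Ω] (P : Measure Ω) [IsProbabilityMeasure P]
    (σ : ℝ≥0) (hσ : 0 < σ) (X : Ω → ℝ) (hXm : Measurable X)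
    (hX : P.map X = gaussianReal 0 (σ ^ 2)) :
    ∀ (c t : ℝ), 0 ≤ t →
      (P {ω | |X ω + c| ≤ t} ≤ P {ω | |X ω| ≤ t}) ∧
      (c ≠ 0 → 0 < t → P {ω | |X ω + c| ≤ t} < P {ω | |X ω| ≤ t}) ∧
      (cdf (gaussianReal 0 1) ((t - c) / σ) - cdf (gaussianReal 0 1) ((-t - c) / σ) ≤
        cdf (gaussianReal 0 1) (t / σ) - cdf (gaussianReal 0 1) (-t / σ)) := by
  intro c t ht
  have hv : σ ^ 2 ≠ 0 := by positivity
  have key : ∀ d : ℝ, P {ω | |X ω + d| ≤ t}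
      = ENNReal.ofReal (∫ x in (-t - d)..(t - d), gaussianPDFReal 0 (σ ^ 2) x) := by
    intro d
    have : {ω | |X ω + d| ≤ t} = X ⁻¹' (Set.Icc (-t - d) (t - d)) := by
      ext ω
      simp only [Set.mem_ofPred_eq, Set.mem_preimage, Set.mem_Icc, abs_le]
      constructor <;> rintro ⟨h1, h2⟩ <;> constructor <;> linarith
    rw [this, ← Measure.map_apply hXm measurableSet_Icc, hX, ← aux_Icc _ hv _ _ (by linarith),
      ofReal_measureReal]
  have key0 : P {ω | |X ω| ≤ t}
      = ENNReal.ofReal (∫ x in (-t)..t, gaussianPDFReal 0 (σ ^ 2) x) := by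
    simpa using key 0
  have hs : (0 : ℝ) < σ := by exact_mod_cast hσ
  rw [key, key0]
  refine ⟨ENNReal.ofReal_le_ofReal (aux_le _ hv c t ht), fun hc ht' => ?_, ?_⟩
  · have h := aux_main _ hv c t hc ht'
    refine (ENNReal.ofReal_lt_ofReal_iff (lt_of_le_of_lt ?_ h)).2 h
    exact intervalIntegral.integral_nonneg (by linarith) (fun x _ => gaussianPDFReal_nonneg _ _ _)
  · rw [aux_cdf _ _ (by gcongr; linarith), aux_cdf _ _ (by gcongr; linarith)]
    have := aux_le 1 one_ne_zero (c / σ) (t / σ) (by positivity)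
    rw [sub_div, sub_div, neg_div]
    exact this
end

section
/- Let σ > 0 and let X be a real random variable with law gaussianReal 0 σ². Let f : ℝ → ℝ be monotone nondecreasing with f(|X + c|) and f(|X|) integrable. Then for every c ∈ ℝ, E[f(|X + c|)] ≥ E[f(|X|)]. -/
open MeasureTheory ProbabilityTheory
open scoped NNReal ENNReal

/-- If `X` has law `gaussianReal 0 σ²` with `σ > 0` and `f` is monotone nondecreasing
with `f(|X + c|)` and `f(|X|)` integrable, then `E[f(|X + c|)] ≥ E[f(|X|)]` for every
`c ∈ ℝ`: biasing an unbiased centered Gaussian estimate cannot reduce the expected loss. -/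
theorem stmt8 {Ω : Type*} [MeasurableSpace Ω] (P : Measure Ω) [IsProbabilityMeasure P]
    (σ : ℝ≥0) (hσ : 0 < σ) (X : Ω → ℝ) (hXm : Measurable X)
    (hX : P.map X = gaussianReal 0 (σ ^ 2))
    (f : ℝ → ℝ) (hf : Monotone f) :
    ∀ c : ℝ, Integrable (fun ω => f |X ω + c|) P → Integrable (fun ω => f |X ω|) P →
      (∫ ω, f |X ω| ∂P) ≤ ∫ ω, f |X ω + c| ∂P := by
  intro c h1 h2
  have hv : (σ ^ 2 : ℝ≥0) ≠ 0 := (pow_pos hσ 2).ne'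
  have hgm : Measurable (fun x : ℝ => f |x + c| - f |x|) :=
    (hf.measurable.comp (by fun_prop)).sub (hf.measurable.comp (by fun_prop))
  rw [← sub_nonneg, ← integral_sub h1 h2]
  have e : ∫ ω, (f |X ω + c| - f |X ω|) ∂P
      = ∫ x, (f |x + c| - f |x|) ∂(gaussianReal 0 (σ ^ 2)) := by
    rw [← hX, integral_map hXm.aemeasurable hgm.aestronglyMeasurable]
  rw [e, integral_gaussianReal_eq_integral_smul hv]
  set h : ℝ → ℝ := fun x => gaussianPDFReal 0 (σ ^ 2) x • (f |x + c| - f |x|) with hh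
  change 0 ≤ ∫ x, h x
  by_cases hi : Integrable h
  · have hs : ∫ x, h (-c - x) = ∫ x, h x := integral_sub_left_eq_self h volume (-c)
    have hi' : Integrable (fun x => h (-c - x)) := hi.comp_sub_left (-c)
    have hsum : 0 ≤ ∫ x, (h x + h (-c - x)) := by
      refine integral_nonneg fun x => ?_
      have a1 : |(-c - x) + c| = |x| := by rw [← abs_neg]; congr 1; ring
      have a2 : |(-c - x)| = |x + c| := by rw [← abs_neg]; congr 1; ring
      have mono : ∀ y z : ℝ, |y| ≤ |z| →
          gaussianPDFReal 0 (σ ^ 2) z ≤ gaussianPDFReal 0 (σ ^ 2) y := by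
        intro y z hyz
        have := sq_le_sq.mpr hyz
        simp only [gaussianPDFReal, sub_zero]
        gcongr
      have a3 : gaussianPDFReal 0 (σ ^ 2) (-c - x) = gaussianPDFReal 0 (σ ^ 2) (x + c) :=
        le_antisymm (mono _ _ a2.ge) (mono _ _ a2.le)
      simp only [hh, smul_eq_mul, a1, a2, a3, Pi.zero_apply]
      rcases le_total |x| |x + c| with hl | hl
      · nlinarith [mul_nonneg (sub_nonneg.2 (mono _ _ hl)) (sub_nonneg.2 (hf hl))]
      · nlinarith [mul_nonneg (sub_nonneg.2 (mono _ _ hl)) (sub_nonneg.2 (hf hl))]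
    rw [integral_add hi hi', hs] at hsum
    linarith
  · rw [integral_undef hi]
end

section
/- Let μ ∈ ℝ, σ' > 0, ε > 0, and let X be a real random variable with law gaussianReal μ σ'², with cumulative distribution function F. Define the punish-reward estimator r̂(x, t) = (t + x)/2 if |x − t| ≤ ε, and r̂(x, t) = t − |t − x| if |x − t| > ε. Then for every x ∈ ℝ, E[r̂(x, X)] = x + (ε/2)·(F(x + ε) − 3·F(x − ε)) − (1/2)·∫_{x−ε}^{x+ε} F(t) dt − 2·∫_{−∞}^{x−ε} F(t) dt, where all integrals converge. -/
open MeasureTheory ProbabilityTheory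
open scoped NNReal ENNReal

lemma lint_cdf (ν : Measure ℝ) [IsProbabilityMeasure ν] (c : ℝ) :
    ∫⁻ t in Set.Iic c, ENNReal.ofReal (cdf ν t) = ∫⁻ y, ENNReal.ofReal (max (c - y) 0) ∂ν := by
  have hS : MeasurableSet {p : ℝ × ℝ | p.2 ≤ p.1 ∧ p.1 ≤ c} :=
    (measurableSet_le measurable_snd measurable_fst).inter
      (measurableSet_le measurable_fst measurable_const)
  have h1 := Measure.prod_apply (μ := (volume : Measure ℝ)) (ν := ν) hS
  have h2 := Measure.prod_apply_symm (μ := (volume : Measure ℝ)) (ν := ν) hS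
  rw [h1] at h2
  rw [← lintegral_indicator measurableSet_Iic]
  convert h2 using 1
  · refine lintegral_congr fun t => ?_
    by_cases h : t ≤ c
    · rw [Set.indicator_of_mem (Set.mem_Iic.2 h), ofReal_cdf]
      congr 1
      ext y
      simp [h]
    · rw [Set.indicator_of_notMem (by simpa using h)]
      symm
      convert measure_empty (μ := ν)
      ext y
      simp [h]
  · refine lintegral_congr fun y => ?_
    have : ((fun x => (x, y)) ⁻¹' {p : ℝ × ℝ | p.2 ≤ p.1 ∧ p.1 ≤ c}) = Set.Icc y c := by
      ext t; simp
    rw [this, Real.volume_Icc, ENNReal.ofReal_max]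
    simp

lemma int_cdf (ν : Measure ℝ) [IsProbabilityMeasure ν] (hν : Integrable (fun y => y) ν) (c : ℝ) :
    IntegrableOn (fun t => cdf ν t) (Set.Iic c) ∧
      ∫ t in Set.Iic c, cdf ν t = ∫ y, max (c - y) 0 ∂ν := by
  have hm : Measurable (fun t => cdf ν t) := (monotone_cdf ν).measurable
  have hi : Integrable (fun y => max (c - y) 0) ν := ((integrable_const c).sub hν).pos_part
  constructor
  · refine ⟨hm.aestronglyMeasurable, ?_⟩
    rw [hasFiniteIntegral_iff_ofReal (Filter.Eventually.of_forall fun t => cdf_nonneg ν t),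
      lint_cdf]
    exact (hasFiniteIntegral_iff_ofReal
      (Filter.Eventually.of_forall fun t => le_max_right _ _)).1 hi.2
  · rw [integral_eq_lintegral_of_nonneg_ae
      (Filter.Eventually.of_forall fun t => cdf_nonneg ν t) hm.aestronglyMeasurable, lint_cdf,
      integral_eq_lintegral_of_nonneg_ae (f := fun y => max (c - y) 0)
      (Filter.Eventually.of_forall fun t => le_max_right _ _) hi.1]

/-- Expected reputation under the punish-reward (PR) mechanism: with aggregate
cross-report `X ~ gaussianReal μ σ'²` with cdf `F`, and estimator
`r̂(x,t) = (t+x)/2` if `|x − t| ≤ ε`, `t − |t − x|` otherwise, we have for every `x`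
`E[r̂(x,X)] = x + (ε/2)(F(x+ε) − 3F(x−ε)) − (1/2)∫_{x−ε}^{x+ε} F − 2∫_{−∞}^{x−ε} F`,
all integrals converging. -/
theorem stmt10 {Ω : Type*} [MeasurableSpace Ω] (P : Measure Ω) [IsProbabilityMeasure P]
    (μ : ℝ) (σ' : ℝ≥0) (hσ' : 0 < σ') (ε : ℝ) (hε : 0 < ε)
    (X : Ω → ℝ) (hXm : Measurable X) (hX : P.map X = gaussianReal μ (σ' ^ 2))
    (F : ℝ → ℝ) (hF : ∀ t, F t = cdf (gaussianReal μ (σ' ^ 2)) t)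
    (rhat : ℝ → ℝ → ℝ)
    (hrhat : ∀ x t, rhat x t = if |x - t| ≤ ε then (t + x) / 2 else t - |t - x|) :
    ∀ x : ℝ,
      IntegrableOn F (Set.Iic (x - ε)) ∧
      (∫ ω, rhat x (X ω) ∂P) =
        x + ε / 2 * (F (x + ε) - 3 * F (x - ε))
          - 1 / 2 * (∫ t in (x - ε)..(x + ε), F t)
          - 2 * ∫ t in Set.Iic (x - ε), F t := by
  intro x
  have hFe : F = fun t => cdf (gaussianReal μ (σ' ^ 2)) t := funext hF
  have hna : NullSingletonClass (gaussianReal μ (σ' ^ 2)) := nullSingletonClass_gaussianReal (by positivity)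
  have hid : Integrable (fun y => y) (gaussianReal μ (σ' ^ 2)) := IsGaussian.integrable_id
  obtain ⟨ha, ha'⟩ := int_cdf _ hid (x - ε)
  obtain ⟨hb, hb'⟩ := int_cdf _ hid (x + ε)
  rw [← hFe] at ha hb
  refine ⟨ha, ?_⟩
  rw [← intervalIntegral.integral_Iic_sub_Iic ha hb]
  simp only [hFe]
  rw [ha', hb', cdf_eq_real, cdf_eq_real]
  generalize hν : gaussianReal μ (σ' ^ 2) = ν at *
  have hprob : IsProbabilityMeasure ν := hν ▸ inferInstance
  have hrm : Measurable (rhat x) := by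
    have : rhat x = fun t => if |x - t| ≤ ε then (t + x) / 2 else t - |t - x| :=
      funext (hrhat x)
    rw [this]
    exact Measurable.ite (measurableSet_le (by fun_prop) measurable_const)
      (by fun_prop) (by fun_prop)
  rw [← integral_map (φ := X) (f := rhat x) hXm.aemeasurable hrm.aestronglyMeasurable, hX]
  have hIa : Integrable (fun y => max (x - ε - y) 0) ν := ((integrable_const _).sub hid).pos_part
  have hIb : Integrable (fun y => max (x + ε - y) 0) ν := ((integrable_const _).sub hid).pos_part
  have hJ : ∀ c : ℝ, Integrable ((Set.Iic c).indicator (fun _ => (1 : ℝ))) ν := fun c =>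
    (integrable_const _).indicator measurableSet_Iic
  have hJ' : ∀ c : ℝ, ∫ t, (Set.Iic c).indicator (fun _ => (1 : ℝ)) t ∂ν = ν.real (Set.Iic c) :=
    fun c => integral_indicator_one measurableSet_Iic
  have key : rhat x =ᵐ[ν] fun t => x - 1 / 2 * max (x + ε - t) 0 - 3 / 2 * max (x - ε - t) 0
      + ε / 2 * (Set.Iic (x + ε)).indicator (fun _ => (1 : ℝ)) t
      - 3 * ε / 2 * (Set.Iic (x - ε)).indicator (fun _ => (1 : ℝ)) t := by
    have hne : ∀ᵐ t ∂ν, t ≠ x - ε := by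
      simp [ae_iff]
    filter_upwards [hne] with t ht
    rw [hrhat]
    simp only [Set.indicator_apply, Set.mem_Iic]
    rcases lt_or_gt_of_ne ht with h | h
    · rw [if_neg (by rw [abs_of_pos (by linarith)]; linarith), abs_of_neg (by linarith),
        max_eq_left (by linarith), max_eq_left (by linarith), if_pos (by linarith),
        if_pos (by linarith)]
      ring
    · by_cases h2 : t ≤ x + ε
      · rw [if_pos (abs_le.2 ⟨by linarith, by linarith⟩),
          max_eq_left (by linarith), max_eq_right (by linarith), if_pos (by linarith),
          if_neg (by linarith)]
        ring
      · push Not at h2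
        rw [if_neg (by rw [abs_of_neg (by linarith)]; linarith), abs_of_pos (by linarith),
          max_eq_right (by linarith), max_eq_right (by linarith), if_neg (by linarith),
          if_neg (by linarith)]
        ring
  rw [integral_congr_ae key, integral_sub, integral_add, integral_sub, integral_sub,
    integral_const_mul, integral_const_mul, integral_const_mul, integral_const_mul, hJ', hJ']
  · simp only [integral_const, probReal_univ, smul_eq_mul]
    ring
  all_goals first
    | exact integrable_const _
    | exact hIa.const_mul _
    | exact hIb.const_mul _
    | exact (hJ _).const_mul _
    | exact (integrable_const _).sub (hIb.const_mul _)
    | exact ((integrable_const _).sub (hIb.const_mul _)).sub (hIa.const_mul _)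
    | exact (((integrable_const _).sub (hIb.const_mul _)).sub (hIa.const_mul _)).add
        ((hJ _).const_mul _)
end

section
/- Let μ ∈ ℝ, σ' > 0, ε > 0, and let X be a real random variable with law gaussianReal μ σ'², with cumulative distribution function F and density φ. Define the punish-reward estimator r̂(x, t) = (t + x)/2 if |x − t| ≤ ε, and r̂(x, t) = t − |t − x| if |x − t| > ε. Then the function x ↦ E[r̂(x, X)] is differentiable on ℝ with derivative 1 + (ε/2)·(φ(x + ε) − 3·φ(x − ε)) − (1/2)·(F(x + ε) + 3·F(x − ε)). -/
open MeasureTheory ProbabilityTheory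
open scoped NNReal ENNReal

lemma hasDerivAt_integral_Iic_aux (f : ℝ → ℝ) (hf : Integrable f) (hc : Continuous f) (a : ℝ) :
    HasDerivAt (fun b => ∫ t in Set.Iic b, f t) (f a) a := by
  have h : (fun b => ∫ t in Set.Iic b, f t)
      = fun b => (∫ t in Set.Iic a, f t) + ∫ t in a..b, f t := by
    funext b
    rw [← intervalIntegral.integral_Iic_sub_Iic hf.integrableOn hf.integrableOn]
    ring
  rw [h]
  exact (intervalIntegral.integral_hasDerivAt_right (hf.intervalIntegrable)
    (hc.stronglyMeasurableAtFilter _ _) hc.continuousAt).const_add _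

lemma continuous_gaussianPDFReal_aux (μ : ℝ) (v : ℝ≥0) : Continuous (gaussianPDFReal μ v) := by
  rw [gaussianPDFReal_def]
  fun_prop

lemma integrable_mul_gaussianPDFReal_aux (μ : ℝ) (v : ℝ≥0) (hv : v ≠ 0) :
    Integrable (fun t => gaussianPDFReal μ v t * t) := by
  have h : Integrable (fun t : ℝ => t) (gaussianReal μ v) :=
    memLp_one_iff_integrable.1 (memLp_id_gaussianReal (μ := μ) (v := v) 1)
  rw [gaussianReal_of_var_ne_zero _ hv, integrable_withDensity_iff_integrable_smul'
    (measurable_gaussianPDF μ v) (by simp [gaussianPDF])] at h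
  simpa using h

/-- Differentiability of the expected reputation in the punish-reward (PR) mechanism:
with aggregate cross-report `X ~ gaussianReal μ σ'²` with cdf `F` and density `φ`, the
map `x ↦ E[r̂(x, X)]` has derivative
`1 + (ε/2)(φ(x+ε) − 3φ(x−ε)) − (1/2)(F(x+ε) + 3F(x−ε))` at every `x`. -/
theorem stmt11 {Ω : Type*} [MeasurableSpace Ω] (P : Measure Ω) [IsProbabilityMeasure P]
    (μ : ℝ) (σ' : ℝ≥0) (hσ' : 0 < σ') (ε : ℝ) (hε : 0 < ε)
    (X : Ω → ℝ) (hXm : Measurable X) (hX : P.map X = gaussianReal μ (σ' ^ 2))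
    (F : ℝ → ℝ) (hF : ∀ t, F t = cdf (gaussianReal μ (σ' ^ 2)) t)
    (φ : ℝ → ℝ) (hφ : ∀ t, φ t = gaussianPDFReal μ (σ' ^ 2) t)
    (rhat : ℝ → ℝ → ℝ)
    (hrhat : ∀ x t, rhat x t = if |x - t| ≤ ε then (t + x) / 2 else t - |t - x|) :
    ∀ x : ℝ,
      HasDerivAt (fun y => ∫ ω, rhat y (X ω) ∂P)
        (1 + ε / 2 * (φ (x + ε) - 3 * φ (x - ε))
          - 1 / 2 * (F (x + ε) + 3 * F (x - ε))) x := by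
  intro x
  have hv : σ' ^ 2 ≠ 0 := pow_ne_zero _ hσ'.ne'
  have hφ' : φ = gaussianPDFReal μ (σ' ^ 2) := funext hφ
  have hc : Continuous φ := hφ' ▸ continuous_gaussianPDFReal_aux μ _
  have hi : Integrable φ := hφ' ▸ integrable_gaussianPDFReal μ _
  have hit : Integrable (fun t => φ t * t) :=
    hφ' ▸ integrable_mul_gaussianPDFReal_aux μ _ hv
  have h1 : ∫ t, φ t = 1 := hφ' ▸ integral_gaussianPDFReal_eq_one μ hv
  have hF' : ∀ a, F a = ∫ t in Set.Iic a, φ t := by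
    intro a
    rw [hF, cdf_eq_real, measureReal_def, gaussianReal_apply_eq_integral μ hv, ← hφ',
      ENNReal.toReal_ofReal]
    exact integral_nonneg fun t => by rw [hφ']; exact gaussianPDFReal_nonneg _ _ _
  have hE : ∀ y, ∫ ω, rhat y (X ω) ∂P = y
      + 1 / 2 * ((∫ t in Set.Iic (y + ε), φ t * t) - y * F (y + ε))
      + 3 / 2 * ((∫ t in Set.Iic (y - ε), φ t * t) - y * F (y - ε)) := by
    intro y
    have hm : Measurable (rhat y) := by
      have : rhat y = fun t => if |y - t| ≤ ε then (t + y) / 2 else t - |t - y| :=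
        funext (hrhat y)
      rw [this]
      refine Measurable.ite (measurableSet_le (by fun_prop) (by fun_prop)) (by fun_prop) ?_
      fun_prop
    rw [← integral_map (f := rhat y) hXm.aemeasurable hm.aestronglyMeasurable, hX,
      integral_gaussianReal_eq_integral_smul hv, ← hφ']
    have hg : Integrable (fun t => φ t * t - y * φ t) := hit.sub (hi.const_mul y)
    have hs : ∀ a, ∫ t in Set.Iic a, (φ t * t - y * φ t)
        = (∫ t in Set.Iic a, φ t * t) - y * F a := by
      intro a
      rw [integral_sub hit.integrableOn (hi.const_mul y).integrableOn, integral_const_mul, hF']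
    rw [← hs, ← hs, ← integral_indicator measurableSet_Iic, ← integral_indicator measurableSet_Iic]
    have hy : y = ∫ t, y * φ t := by rw [integral_const_mul, h1, mul_one]
    conv_rhs => rw [add_assoc]; arg 1; rw [hy]
    rw [← integral_const_mul, ← integral_const_mul, ← integral_add, ← integral_add]
    · apply integral_congr_ae
      have : ∀ᵐ t : ℝ, t ≠ y - ε := by simp [ae_iff]
      filter_upwards [this] with t ht
      simp only [smul_eq_mul, hrhat, Set.indicator_apply, Set.mem_Iic]
      by_cases ha : t ≤ y + ε
      · by_cases hb : t ≤ y - ε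
        · have hlt := lt_of_le_of_ne hb ht
          rw [if_neg, if_pos ha, if_pos hb, abs_of_neg (by linarith)]
          · ring
          · rw [abs_of_pos (by linarith)]; linarith
        · rw [if_pos, if_pos ha, if_neg hb]
          · ring
          · rw [abs_le]; constructor <;> linarith
      · rw [if_neg, if_neg ha, if_neg (by linarith), abs_of_pos (by linarith)]
        · ring
        · rw [abs_of_neg (by linarith)]; linarith
    · exact hi.const_mul y
    · exact ((hg.indicator measurableSet_Iic).const_mul _).add
        ((hg.indicator measurableSet_Iic).const_mul _)
    · exact (hg.indicator measurableSet_Iic).const_mul _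
    · exact (hg.indicator measurableSet_Iic).const_mul _
  rw [funext hE]
  have hFd : ∀ a, HasDerivAt F (φ a) a := by
    intro a
    rw [funext hF']
    exact hasDerivAt_integral_Iic_aux φ hi hc a
  have hGd : ∀ a, HasDerivAt (fun b => ∫ t in Set.Iic b, φ t * t) (φ a * a) a :=
    fun a => hasDerivAt_integral_Iic_aux _ hit (hc.mul continuous_id) a
  have hp := ((hGd (x + ε)).comp_add_const x ε).sub
    ((hasDerivAt_id x).mul ((hFd (x + ε)).comp_add_const x ε))
  have hq := ((hGd (x - ε)).comp_sub_const x ε).sub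
    ((hasDerivAt_id x).mul ((hFd (x - ε)).comp_sub_const x ε))
  refine (((hasDerivAt_id x).add (hp.const_mul (1 / 2))).add
    (hq.const_mul (3 / 2))).congr_deriv ?_
  simp only [id]
  ring
end

section
/- Let K ≥ 3 and let d : ZMod K → ℝ be arbitrary (representing the discrepancies d_i = |x_{ii} − x_{(i−1)i}| between each user's self-report and the cross-report of its predecessor on the ring). Define the Extended-AS taxes t_i = d_i − (1/(K−2))·Σ_{j ∉ {i, i+1}} d_j, where indices are taken modulo K. Then Σ_{i} t_i = 0; that is, the Extended-AS mechanism is budget balanced for every realization of reports. -/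
/-- Budget balance of the Extended-AS mechanism: with `K ≥ 3` users on a ring (indices in
`ZMod K`) and arbitrary discrepancies `d_i`, the taxes
`t_i = d_i − (1/(K−2))·Σ_{j ∉ {i, i+1}} d_j` sum to zero. -/
theorem stmt19 (K : ℕ) [NeZero K] (hK : 3 ≤ K) (d : ZMod K → ℝ) :
    ∑ i : ZMod K,
        (d i - (1 / ((K : ℝ) - 2)) * ∑ j ∈ Finset.univ \ {i, i + 1}, d j) = 0 := by
  have hK' : (3 : ℝ) ≤ (K : ℝ) := by exact_mod_cast hK
  have hne : (K : ℝ) - 2 ≠ 0 := by linarith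
  haveI : Fact (1 < K) := ⟨by omega⟩
  have key : ∀ i : ZMod K, ∑ j ∈ Finset.univ \ {i, i + 1}, d j
      = (∑ j, d j) - (d i + d (i + 1)) := by
    intro i
    have h1 : i ≠ i + 1 := by
      intro h
      exact one_ne_zero (left_eq_add.mp h)
    rw [← Finset.sum_pair h1, eq_sub_iff_add_eq]
    exact Finset.sum_sdiff (Finset.subset_univ _)
  have shift : ∑ i : ZMod K, d (i + 1) = ∑ i, d i :=
    Equiv.sum_comp (Equiv.addRight (1 : ZMod K)) d
  simp only [key]
  rw [Finset.sum_sub_distrib, ← Finset.mul_sum, Finset.sum_sub_distrib,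
    Finset.sum_add_distrib, shift, Finset.sum_const, Finset.card_univ, ZMod.card, nsmul_eq_mul]
  field_simp
  ring
end
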